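/- Let X ⊂ P^n (n ≥ 4) be a smooth complete intersection of two quadrics over an algebraically closed field of characteristic not 2, and let D ≅ P^1 be the pencil of quadrics containing X. Define Z = {(q, h) ∈ D × (P^n)* : the quadric q ∩ h is singular}. Then the second projection Z → (P^n)* is a finite flat covering of degree n, and Z is integral (irreducible and reduced). -/

import Mathlib

open Matrix MvPolynomial

/-- The equation of the incidence variety `Z ⊂ D × (Pⁿ)*`, where `D ≅ P¹` is the pencil of
quadrics spanned by `q₁, q₂`: a quadric `λ q₁ + μ q₂` of the pencil meets the hyperplane
`h = {Σ hⱼ xⱼ = 0}` in a singular quadric exactly when `hᵀ · adj(λ M₁ + μ M₂) · h = 0`.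
Variables `Sum.inl` are the pencil coordinates `(λ, μ)`, variables `Sum.inr` are the dual
coordinates `(h₀, …, h_n)` of the hyperplane. -/
noncomputable def pencilDualForm {k : Type*} [Field k] {n : ℕ}
    (M1 M2 : Matrix (Fin (n + 1)) (Fin (n + 1)) k) :
    MvPolynomial (Fin 2 ⊕ Fin (n + 1)) k :=
  ∑ i, ∑ j, X (Sum.inr i) * X (Sum.inr j) *
    (Matrix.adjugate (Matrix.of fun i j =>
      X (Sum.inl 0) * C (M1 i j) + X (Sum.inl 1) * C (M2 i j))) i j

/-!
Let `M₀` be a nondegenerate member of the pencil. Since `X` is smooth, no eigenvector of `M₀⁻¹ M₂`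
is isotropic for `M₀`, so over an algebraically closed field `M₀⁻¹ M₂` is diagonalizable with
distinct eigenvalues. Hence the pencil is congruent to a diagonal one whose entries
`ℓᵢ = aᵢ λ + bᵢ μ` are pairwise non-proportional linear forms on `D`, and in the dual coordinates
`yᵢ` the equation of `Z` is `∑ᵢ yᵢ² ∏_{j ≠ i} ℓⱼ`. As a polynomial in a single `yᵢ` it is
Eisenstein at the prime `ℓᵢ`, so `Z` is integral. On the fibre over `h` it is congruent to
`yᵢ(h)² ∏_{j ≠ i} ℓⱼ` modulo `ℓᵢ`, so the fibre is finite as soon as some `yᵢ(h)` is nonzero.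
-/

section AdjugateForm

variable {R S ι κ : Type*} [CommRing R] [CommRing S] [Fintype ι] [DecidableEq ι] [Fintype κ]
  [DecidableEq κ]

/-- The quadratic form `x ↦ xᵀ · adj A · x`: the equation of the dual of the quadric with Gram
matrix `A`, which vanishes at `x` when the hyperplane `x` is tangent to the quadric. -/
def adjugateForm (A : Matrix ι ι R) (x : ι → R) : R :=
  x ⬝ᵥ A.adjugate *ᵥ x

theorem map_adjugateForm {F : Type*} [FunLike F R S] [RingHomClass F R S] (f : F)
    (A : Matrix ι ι R) (x : ι → R) :
    f (adjugateForm A x) = adjugateForm (A.map f) (f ∘ x) := by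
  have hA : A.adjugate.map f = (A.map f).adjugate := (f : R →+* S).map_adjugate A
  have hmul : f ∘ (A.adjugate *ᵥ x) = A.adjugate.map f *ᵥ (f ∘ x) :=
    funext ((f : R →+* S).map_mulVec _ _)
  rw [adjugateForm, adjugateForm, ← hA, ← hmul]
  exact (f : R →+* S).map_dotProduct _ _

theorem adjugateForm_submatrix_equiv (e : κ ≃ ι) (A : Matrix ι ι R) (x : ι → R) :
    adjugateForm (A.submatrix e e) (x ∘ e) = adjugateForm A x := by
  rw [adjugateForm, adjugate_submatrix_equiv_self, submatrix_mulVec_equiv, Function.comp_assoc,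
    e.self_comp_symm, Function.comp_id, comp_equiv_dotProduct_comp_equiv, adjugateForm]

theorem adjugateForm_transpose_mul_mul (A Q : Matrix ι ι R) (x : ι → R) :
    adjugateForm (Qᵀ * A * Q) (Qᵀ *ᵥ x) = Q.det ^ 2 * adjugateForm A x := by
  have hadj : Q * (Qᵀ * A * Q).adjugate * Qᵀ = Q.det ^ 2 • A.adjugate :=
    calc Q * (Qᵀ * A * Q).adjugate * Qᵀ
        = (Q * Q.adjugate) * A.adjugate * (Q * Q.adjugate)ᵀ := by
          simp only [adjugate_mul_distrib, adjugate_transpose, transpose_mul, Matrix.mul_assoc]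
      _ = Q.det ^ 2 • A.adjugate := by
          simp [mul_adjugate, smul_smul, sq]
  calc (Qᵀ *ᵥ x) ⬝ᵥ (Qᵀ * A * Q).adjugate *ᵥ Qᵀ *ᵥ x
      = x ⬝ᵥ (Q * (Qᵀ * A * Q).adjugate * Qᵀ) *ᵥ x := by
        rw [mulVec_transpose, ← dotProduct_mulVec, ← mulVec_transpose, mulVec_mulVec,
          mulVec_mulVec]
    _ = Q.det ^ 2 * adjugateForm A x := by
        rw [hadj, smul_mulVec, dotProduct_smul, smul_eq_mul, adjugateForm]

theorem adjugateForm_diagonal (l x : ι → R) :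
    adjugateForm (diagonal l) x = ∑ i, x i ^ 2 * ∏ j ∈ Finset.univ.erase i, l j := by
  simp only [adjugateForm, adjugate_diagonal, dotProduct, mulVec_diagonal]
  exact Finset.sum_congr rfl fun i _ => by ring

theorem adjugateForm_diagonal_option (l x : Option ι → R) :
    adjugateForm (diagonal l) x = (∏ j, l (some j)) * x none ^ 2 +
      l none * adjugateForm (diagonal (l ∘ some)) (x ∘ some) := by
  simp only [adjugateForm_diagonal, Fintype.sum_option, ← Finset.filter_ne', Finset.prod_filter,
    Fintype.prod_option, Finset.mul_sum, Function.comp_apply]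
  congr 1
  · simp [mul_comm]
  · exact Finset.sum_congr rfl fun i _ => by simp; ring

theorem not_dvd_adjugateForm_diagonal {l x : ι → R} {p : R} (hp : Prime p) (i : ι)
    (hl : ∀ j ≠ i, ¬ p ∣ l j) (hxi : ¬ p ∣ x i) (hx : ∀ j ≠ i, p ∣ l i * x j) :
    ¬ p ∣ adjugateForm (diagonal l) x := by
  have hdvd : p ∣ ∑ j ∈ Finset.univ.erase i, x j ^ 2 * ∏ m ∈ Finset.univ.erase j, l m := by
    refine Finset.dvd_sum fun j hj => ?_
    have hji := Finset.ne_of_mem_erase hj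
    have hli : l i ∣ ∏ m ∈ Finset.univ.erase j, l m :=
      Finset.dvd_prod_of_mem l (Finset.mem_erase.2 ⟨hji.symm, Finset.mem_univ i⟩)
    rw [mul_comm]
    exact (hx j hji).trans (mul_dvd_mul hli (dvd_pow_self (x j) two_ne_zero))
  rw [adjugateForm_diagonal, ← Finset.add_sum_erase _ _ (Finset.mem_univ i),
    dvd_add_left hdvd, hp.dvd_mul, hp.dvd_finsetProd_iff]
  rintro (h | ⟨j, hj, h⟩)
  · exact hxi (hp.dvd_of_dvd_pow h)
  · exact hl j (Finset.ne_of_mem_erase hj) h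

theorem not_C_dvd_adjugateForm_diagonal_X {l : ι → R} {p : R} (hp : Prime p) (i : ι)
    (hl : ∀ j ≠ i, ¬ p ∣ l j) :
    ¬ (C p : MvPolynomial ι R) ∣ adjugateForm (diagonal fun j => C (l j)) X := by
  intro h
  have heval := map_dvd (eval (Pi.single i 1)) h
  rw [map_adjugateForm, diagonal_map (map_zero _), eval_C] at heval
  refine not_dvd_adjugateForm_diagonal hp i (fun j hj => ?_) ?_ (fun j hj => ?_) heval
  · simpa using hl j hj
  · simpa using hp.not_dvd_one
  · simp [hj]

end AdjugateForm

section Irreducible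

theorem irreducible_C_mul_X_pow_add_C {R : Type*} [CommRing R] [IsDomain R] {p c l : R} {m : ℕ}
    (hm : m ≠ 0) (hl : Prime l) (hlp : ¬ l ∣ p) (hlc : l ∣ c) (hlc2 : ¬ l ^ 2 ∣ c)
    (hpc : IsRelPrime p c) :
    Irreducible (Polynomial.C p * Polynomial.X ^ m + Polynomial.C c) := by
  have hp : p ≠ 0 := fun h => hlp (h ▸ dvd_zero l)
  have hpos : 0 < (Polynomial.C p * Polynomial.X ^ m).degree := by
    rw [Polynomial.degree_C_mul_X_pow m hp]
    exact_mod_cast Nat.pos_of_ne_zero hm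
  have hdeg : (Polynomial.C p * Polynomial.X ^ m + Polynomial.C c).degree = (m : WithBot ℕ) := by
    rw [Polynomial.degree_add_C hpos, Polynomial.degree_C_mul_X_pow m hp]
  have hlead : (Polynomial.C p * Polynomial.X ^ m + Polynomial.C c).leadingCoeff = p := by
    rw [Polynomial.leadingCoeff_add_of_degree_lt' (Polynomial.degree_C_le.trans_lt hpos),
      Polynomial.leadingCoeff_C_mul_X_pow]
  have hcoeff : ∀ i : ℕ, (Polynomial.C p * Polynomial.X ^ m + Polynomial.C c).coeff i =
      (if i = m then p else 0) + if i = 0 then c else 0 := by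
    simp [Polynomial.coeff_C]
  refine Polynomial.irreducible_of_eisenstein_criterion
    ((Ideal.span_singleton_prime hl.ne_zero).2 hl) ?_ (fun i hi => ?_) ?_ ?_ fun r hr => ?_
  · rwa [hlead, Ideal.mem_span_singleton]
  · have him : i ≠ m := (Nat.cast_lt.1 (hdeg ▸ hi)).ne
    rw [Ideal.mem_span_singleton, hcoeff, if_neg him, zero_add]
    split_ifs
    exacts [hlc, dvd_zero l]
  · rw [hdeg]
    exact_mod_cast Nat.pos_of_ne_zero hm
  · rwa [Ideal.span_singleton_pow, Ideal.mem_span_singleton, hcoeff, if_neg hm.symm, if_pos rfl,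
      zero_add]
  · rw [Polynomial.C_dvd_iff_dvd_coeff] at hr
    refine hpc ?_ ?_
    · simpa [hcoeff, hm] using hr m
    · simpa [hcoeff, hm.symm] using hr 0

variable {R ι : Type*} [CommRing R] [IsDomain R] [UniqueFactorizationMonoid R] [Fintype ι]
  [DecidableEq ι]

theorem irreducible_adjugateForm_diagonal_option [Nonempty ι] {l : Option ι → R}
    (hl : ∀ i, Prime (l i)) (hne : Pairwise fun i j => ¬ l i ∣ l j) :
    Irreducible (adjugateForm (diagonal fun i => C (l i)) X : MvPolynomial (Option ι) R) := by
  set d : MvPolynomial ι R := adjugateForm (diagonal fun i => C (l (some i))) X with hd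
  have hform : optionEquivLeft R ι (adjugateForm (diagonal fun i => C (l i)) X) =
      Polynomial.C (∏ i, C (l (some i))) * Polynomial.X ^ 2 +
        Polynomial.C (C (l none) * d) := by
    have hd' : optionEquivLeft R ι (adjugateForm (diagonal fun i => C (l (some i)))
        fun i => X (some i)) = Polynomial.C d := by
      rw [hd, map_adjugateForm, map_adjugateForm, diagonal_map (map_zero _),
        diagonal_map (map_zero _)]
      congr 1 <;> ext1 <;> simp
    rw [adjugateForm_diagonal_option, map_add, map_mul, map_mul]
    simp only [Function.comp_def]
    rw [hd']
    simp
  have hprime (i : Option ι) : Prime (C (l i) : MvPolynomial ι R) := (prime_C_iff ι).2 (hl i)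
  have hdvd {i j : Option ι} (hij : i ≠ j) : ¬ (C (l i) : MvPolynomial ι R) ∣ C (l j) := fun h => by
    simpa using hne hij (by simpa using map_dvd constantCoeff h)
  rw [← MulEquiv.irreducible_iff (optionEquivLeft R ι), hform]
  refine irreducible_C_mul_X_pow_add_C two_ne_zero (hprime none) ?_ (dvd_mul_right _ _) ?_ ?_
  · rw [(hprime none).dvd_finsetProd_iff]
    rintro ⟨i, -, h⟩
    exact hdvd (Option.some_ne_none i).symm h
  · rw [sq, mul_dvd_mul_iff_left (hprime none).ne_zero]
    exact not_C_dvd_adjugateForm_diagonal_X (hl none) (Classical.arbitrary ι)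
      fun j _ => hne (Option.some_ne_none j).symm
  · refine IsRelPrime.prod_left fun i _ =>
      (hprime _).irreducible.isRelPrime_iff_not_dvd.2 fun h => ?_
    rcases (hprime _).dvd_or_dvd h with h | h
    · exact hdvd (Option.some_ne_none i) h
    · exact not_C_dvd_adjugateForm_diagonal_X (hl (some i)) i
        (fun j hj => hne (by simpa using hj.symm)) h

theorem irreducible_adjugateForm_diagonal [Nontrivial ι] {l : ι → R}
    (hl : ∀ i, Prime (l i)) (hne : Pairwise fun i j => ¬ l i ∣ l j) :
    Irreducible (adjugateForm (diagonal fun i => C (l i)) X : MvPolynomial ι R) := by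
  obtain ⟨i₀⟩ := (inferInstance : Nonempty ι)
  have : Nonempty {i // i ≠ i₀} := (exists_ne i₀).elim fun i hi => ⟨⟨i, hi⟩⟩
  let e := Equiv.optionSubtypeNe i₀
  have h := irreducible_adjugateForm_diagonal_option (l := l ∘ e) (fun i => hl (e i))
    (hne.comp_of_injective e.injective)
  rw [← MulEquiv.irreducible_iff (renameEquiv R e)] at h
  convert h
  rw [map_adjugateForm, ← adjugateForm_submatrix_equiv e,
    diagonal_map (map_zero _), submatrix_diagonal _ _ e.injective]
  congr 1
  · simp [Function.comp_def]
  · ext1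
    simp

end Irreducible

section LinearSubst

variable {R ι : Type*} [CommRing R] [Fintype ι] [DecidableEq ι]

/-- The linear change of variables `Xᵢ ↦ ∑ⱼ Qᵢⱼ Xⱼ` of a polynomial ring, which transports
irreducibility between a form and its diagonalization. -/
noncomputable def linearSubst (Q : Matrix ι ι R) (hQ : IsUnit Q.det) :
    MvPolynomial ι R ≃ₐ[R] MvPolynomial ι R :=
  AlgEquiv.ofAlgHom (bind₁ Q.toMvPolynomial) (bind₁ Q⁻¹.toMvPolynomial)
    (algHom_ext fun i => by simp [← toMvPolynomial_mul, Q.nonsing_inv_mul hQ])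
    (algHom_ext fun i => by simp [← toMvPolynomial_mul, Q.mul_nonsing_inv hQ])

theorem linearSubst_comp_X (Q : Matrix ι ι R) (hQ : IsUnit Q.det) :
    linearSubst Q hQ ∘ X = Q.map C *ᵥ X := by
  ext1 i
  simp [linearSubst, toMvPolynomial, mulVec, dotProduct, C_mul_X_eq_monomial]

theorem linearSubst_adjugateForm_transpose_mul_mul (A Q : Matrix ι ι R) (hQ : IsUnit Qᵀ.det) :
    linearSubst Qᵀ hQ (adjugateForm ((Qᵀ * A * Q).map C) X) =
      C Q.det ^ 2 * adjugateForm (A.map C) X := by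
  have hmap (B : Matrix ι ι R) : (B.map C).map (linearSubst Qᵀ hQ) = B.map C := by
    ext1 i j
    exact (linearSubst Qᵀ hQ).commutes (B i j)
  rw [map_adjugateForm, hmap, linearSubst_comp_X, Matrix.map_mul, Matrix.map_mul,
    transpose_map, adjugateForm_transpose_mul_mul, RingHom.map_det, RingHom.mapMatrix_apply]

theorem irreducible_adjugateForm_of_transpose_mul_mul_eq_diagonal [IsDomain R]
    [UniqueFactorizationMonoid R] [Nontrivial ι] {A Q : Matrix ι ι R} {l : ι → R}
    (hQ : IsUnit Q.det) (hA : Qᵀ * A * Q = diagonal l) (hl : ∀ i, Prime (l i))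
    (hne : Pairwise fun i j => ¬ l i ∣ l j) :
    Irreducible (adjugateForm (A.map C) X : MvPolynomial ι R) := by
  have hQ' : IsUnit Qᵀ.det := by rwa [det_transpose]
  have hdiag : Irreducible (adjugateForm ((Qᵀ * A * Q).map C) X : MvPolynomial ι R) := by
    rw [hA, diagonal_map (map_zero _)]
    exact irreducible_adjugateForm_diagonal hl hne
  rwa [← MulEquiv.irreducible_iff (linearSubst Qᵀ hQ'),
    linearSubst_adjugateForm_transpose_mul_mul, irreducible_isUnit_mul ((hQ.map C).pow 2)] at hdiag

end LinearSubst

section Pencil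

variable {k ι : Type*} [Field k]

/-- The linear form `a λ + b μ` on the projective line whose coordinates `λ`, `μ` are the variables
`X 0` and `X 1`; these are the entries of a pencil of matrices. -/
noncomputable def pencilForm (a b : k) : MvPolynomial (Fin 2) k :=
  X 0 * C a + X 1 * C b

theorem prime_pencilForm {a b : k} (hab : a ≠ 0 ∨ b ≠ 0) : Prime (pencilForm a b) := by
  have key {i j : Fin 2} (hij : i ≠ j) {c : k} (d : k) (hc : c ≠ 0) :
      Irreducible (X i * C c + X j * C d : MvPolynomial (Fin 2) k) := by
    rw [mul_comm (X i)]
    refine irreducible_mul_X_add _ _ i (by simpa using hc) (by simp) (fun h => ?_) ?_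
    · simpa [hij] using vars_mul _ _ h
    · exact ((isUnit_iff_ne_zero.2 hc).map C).isRelPrime_left
  refine Irreducible.prime ?_
  rcases hab with ha | hb
  · exact key zero_ne_one b ha
  · rw [pencilForm, add_comm]
    exact key one_ne_zero a hb

theorem not_pencilForm_dvd_pencilForm {a b c d : k} (h : a * d ≠ c * b) :
    ¬ pencilForm a b ∣ pencilForm c d := by
  intro hdvd
  have heval := map_dvd (eval ![b, -a]) hdvd
  have hzero : b * a + -(a * b) = 0 := by ring
  simp only [pencilForm, map_add, map_mul, eval_X, eval_C, cons_val_zero, cons_val_one,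
    neg_mul, hzero, zero_dvd_iff] at heval
  exact h (by linear_combination -heval)

theorem prime_pencilForm_of_pairwise [Nontrivial ι] {a b : ι → k}
    (hab : Pairwise fun i j => a i * b j ≠ a j * b i) (i : ι) :
    Prime (pencilForm (a i) (b i)) := by
  obtain ⟨j, hj⟩ := exists_ne i
  refine prime_pencilForm ?_
  by_contra! h
  exact hab hj.symm (by simp [h])

/-- The generic member `λ M₁ + μ M₂` of the pencil of quadrics spanned by two Gram matrices, where
`λ` and `μ` are the variables `X 0` and `X 1`. -/
noncomputable def pencil (M1 M2 : Matrix ι ι k) : Matrix ι ι (MvPolynomial (Fin 2) k) :=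
  of fun i j => pencilForm (M1 i j) (M2 i j)

theorem pencil_eq_add (M1 M2 : Matrix ι ι k) :
    pencil M1 M2 = (X 0 : MvPolynomial (Fin 2) k) • M1.map C +
      (X 1 : MvPolynomial (Fin 2) k) • M2.map C :=
  rfl

theorem pencil_diagonal [DecidableEq ι] (a b : ι → k) :
    pencil (diagonal a) (diagonal b) = diagonal fun i => pencilForm (a i) (b i) := by
  ext1 i j
  by_cases hij : i = j <;> simp [pencil, pencilForm, hij]

theorem transpose_mul_pencil_mul [Fintype ι] (M1 M2 Q : Matrix ι ι k) :
    (Q.map C)ᵀ * pencil M1 M2 * Q.map C = pencil (Qᵀ * M1 * Q) (Qᵀ * M2 * Q) := by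
  simp only [pencil_eq_add, Matrix.map_mul, transpose_map, Matrix.mul_add, Matrix.add_mul,
    Matrix.mul_smul, Matrix.smul_mul]

variable [Fintype ι] [DecidableEq ι] [Nontrivial ι] {M1 M2 Q : Matrix ι ι k} {a b : ι → k}

theorem irreducible_adjugateForm_pencil (hQ : IsUnit Q.det)
    (hM1 : Qᵀ * M1 * Q = diagonal a) (hM2 : Qᵀ * M2 * Q = diagonal b)
    (hab : Pairwise fun i j => a i * b j ≠ a j * b i) :
    Irreducible (adjugateForm ((pencil M1 M2).map C) X :
      MvPolynomial ι (MvPolynomial (Fin 2) k)) := by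
  refine irreducible_adjugateForm_of_transpose_mul_mul_eq_diagonal (Q := Q.map C)
    (l := fun i => pencilForm (a i) (b i)) ?_ ?_ (prime_pencilForm_of_pairwise hab)
    fun i j hij => not_pencilForm_dvd_pencilForm (hab hij)
  · rw [← RingHom.mapMatrix_apply, ← RingHom.map_det]
    exact hQ.map C
  · rw [transpose_mul_pencil_mul, hM1, hM2, pencil_diagonal]

/-- The singular member of the pencil with vertex `Q eᵢ` lies in the fibre over `h` only if `h`
passes through that vertex, and some vertex is off `h` because the vertices span. -/
theorem adjugateForm_pencil_ne_zero (hQ : IsUnit Q.det)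
    (hM1 : Qᵀ * M1 * Q = diagonal a) (hM2 : Qᵀ * M2 * Q = diagonal b)
    (hab : Pairwise fun i j => a i * b j ≠ a j * b i) {h : ι → k} (hh : h ≠ 0) :
    adjugateForm (pencil M1 M2) (C ∘ h) ≠ 0 := by
  obtain ⟨i, hi⟩ : ∃ i, (Qᵀ *ᵥ h) i ≠ 0 := Function.ne_iff.1 fun h0 =>
    hh (eq_zero_of_mulVec_eq_zero (by rw [det_transpose]; exact hQ.ne_zero) h0)
  have hvec : (Q.map C)ᵀ *ᵥ (C ∘ h) = (C : k → MvPolynomial (Fin 2) k) ∘ (Qᵀ *ᵥ h) :=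
    (funext ((C : k →+* MvPolynomial (Fin 2) k).map_mulVec Qᵀ h)).symm
  have hprime := prime_pencilForm_of_pairwise hab i
  have hdvd : ¬ pencilForm (a i) (b i) ∣
      adjugateForm (diagonal fun j => pencilForm (a j) (b j)) (C ∘ (Qᵀ *ᵥ h)) :=
    not_dvd_adjugateForm_diagonal hprime i
      (fun j hj => not_pencilForm_dvd_pencilForm (hab hj.symm))
      (fun hC => hprime.not_isUnit (isUnit_of_dvd_unit hC ((isUnit_iff_ne_zero.2 hi).map C)))
      fun j _ => dvd_mul_right _ _
  intro h0
  rw [← pencil_diagonal, ← hM1, ← hM2, ← transpose_mul_pencil_mul, ← hvec,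
    adjugateForm_transpose_mul_mul, h0, mul_zero] at hdvd
  exact hdvd (dvd_zero _)

end Pencil

section WeightedHomogeneous

variable {R σ ι : Type*} [CommRing R] [Fintype ι] [DecidableEq ι] {w : σ → ℕ}

theorem isWeightedHomogeneous_det {A : Matrix ι ι (MvPolynomial σ R)} {d : ι → ℕ}
    (hA : ∀ i j, (A i j).IsWeightedHomogeneous w (d i)) :
    A.det.IsWeightedHomogeneous w (∑ i, d i) := by
  rw [← det_transpose, det_apply]
  refine IsWeightedHomogeneous.sum _ _ _ fun τ _ => ?_
  exact Submodule.smul_of_tower_mem (weightedHomogeneousSubmodule R w _) (Equiv.Perm.sign τ)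
    (IsWeightedHomogeneous.prod _ _ _ fun i _ => hA i (τ i))

theorem isWeightedHomogeneous_adjugate {A : Matrix ι ι (MvPolynomial σ R)} {d : ℕ}
    (hA : ∀ i j, (A i j).IsWeightedHomogeneous w d) (i j : ι) :
    (A.adjugate i j).IsWeightedHomogeneous w ((Fintype.card ι - 1) * d) := by
  have hsum : ∑ m, Function.update (fun _ => d) j 0 m = (Fintype.card ι - 1) * d := by
    rw [Finset.sum_update_of_mem (Finset.mem_univ j)]
    simp [Finset.card_sdiff]
  rw [adjugate_apply, ← hsum]
  refine isWeightedHomogeneous_det fun m l => ?_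
  obtain rfl | hm := eq_or_ne m j
  · rw [updateRow_self, Function.update_self]
    obtain rfl | hl := eq_or_ne l i
    · simpa using isWeightedHomogeneous_one R w
    · simpa [hl] using isWeightedHomogeneous_zero R w 0
  · rw [updateRow_ne hm, Function.update_of_ne hm]
    exact hA m l

theorem isWeightedHomogeneous_adjugateForm {A : Matrix ι ι (MvPolynomial σ R)}
    {x : ι → MvPolynomial σ R} {d e : ℕ} (hA : ∀ i j, (A i j).IsWeightedHomogeneous w d)
    (hx : ∀ i, (x i).IsWeightedHomogeneous w e) :
    (adjugateForm A x).IsWeightedHomogeneous w (e + ((Fintype.card ι - 1) * d + e)) :=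
  IsWeightedHomogeneous.sum _ _ _ fun i _ => (hx i).mul <|
    IsWeightedHomogeneous.sum _ _ _ fun j _ => (isWeightedHomogeneous_adjugate hA i j).mul (hx j)

end WeightedHomogeneous

section PencilDualForm

variable {k : Type*} [Field k] {n : ℕ} (M1 M2 : Matrix (Fin (n + 1)) (Fin (n + 1)) k)

theorem pencilDualForm_eq_adjugateForm :
    pencilDualForm M1 M2 =
      adjugateForm ((pencil M1 M2).map (rename Sum.inl)) (X ∘ Sum.inr) := by
  have hpencil : (pencil M1 M2).map (rename Sum.inl) = of fun i j =>
      (X (Sum.inl 0) * C (M1 i j) + X (Sum.inl 1) * C (M2 i j) :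
        MvPolynomial (Fin 2 ⊕ Fin (n + 1)) k) := by
    ext1 i j
    simp [pencil, pencilForm]
  simp only [pencilDualForm, adjugateForm, hpencil, dotProduct, mulVec, Finset.mul_sum,
    Function.comp_apply]
  exact Finset.sum_congr rfl fun i _ => Finset.sum_congr rfl fun j _ => by ring

theorem aeval_pencilDualForm (h : Fin (n + 1) → k) :
    aeval (Sum.elim X fun j => C (h j)) (pencilDualForm M1 M2) =
      adjugateForm (pencil M1 M2) (C ∘ h) := by
  rw [pencilDualForm_eq_adjugateForm, map_adjugateForm]
  congr 1
  · ext1 i j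
    simp [pencil, pencilForm]
  · ext1 i
    simp

theorem irreducible_pencilDualForm_iff :
    Irreducible (pencilDualForm M1 M2) ↔
      Irreducible (adjugateForm ((pencil M1 M2).map C) X :
        MvPolynomial (Fin (n + 1)) (MvPolynomial (Fin 2) k)) := by
  let e := (renameEquiv k (Equiv.sumComm (Fin 2) (Fin (n + 1)))).trans
    (sumAlgEquiv k (Fin (n + 1)) (Fin 2))
  rw [← MulEquiv.irreducible_iff e, pencilDualForm_eq_adjugateForm, map_adjugateForm]
  have h1 : ((pencil M1 M2).map (rename Sum.inl)).map e = (pencil M1 M2).map C := by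
    ext1 i j
    simp [e, pencil, pencilForm]
  have h2 : e ∘ X ∘ Sum.inr = X := by
    ext1 i
    simp [e]
  rw [h1, h2]

theorem isWeightedHomogeneous_pencilDualForm :
    (pencilDualForm M1 M2).IsWeightedHomogeneous (Sum.elim (fun _ => 1) (fun _ => 0)) n := by
  rw [pencilDualForm_eq_adjugateForm]
  set w : Fin 2 ⊕ Fin (n + 1) → ℕ := Sum.elim (fun _ => 1) (fun _ => 0)
  have hX (i : Fin 2) (c : k) : (X (Sum.inl i) * C c).IsWeightedHomogeneous w 1 :=
    (isWeightedHomogeneous_X k w (Sum.inl i)).mul (isWeightedHomogeneous_C w c)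
  have hpencil (i j : Fin (n + 1)) :
      ((pencil M1 M2).map (rename Sum.inl) i j).IsWeightedHomogeneous w 1 := by
    simpa [pencil, pencilForm] using (hX 0 (M1 i j)).add (hX 1 (M2 i j))
  simpa [Function.comp_def] using isWeightedHomogeneous_adjugateForm hpencil
    fun i => isWeightedHomogeneous_X k w (Sum.inr i)

end PencilDualForm

section SelfAdjoint

variable {k V : Type*} [Field k] [AddCommGroup V] [Module k V] {B : LinearMap.BilinForm k V}
  {T : Module.End k V}

theorem apply_sub_smul_eq_zero_of_mem_eigenspace (hT : B.IsSelfAdjoint T) {μ : k} {v : V}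
    (hv : v ∈ T.eigenspace μ) (w : V) : B ((T - μ • 1) w) v = 0 := by
  have hadj : B (T w) v = B w (T v) := hT w v
  rw [Module.End.mem_eigenspace_iff.1 hv] at hadj
  simp [hadj]

/-- If `(T - μ)² w = 0`, then `(T - μ) w` is zero or an isotropic eigenvector. -/
theorem maxGenEigenspace_le_eigenspace_of_anisotropic (hT : B.IsSelfAdjoint T) {μ : k}
    (haniso : ∀ v, T.HasEigenvector μ v → B v v ≠ 0) :
    T.maxGenEigenspace μ ≤ T.eigenspace μ := by
  have hker : LinearMap.ker ((T - μ • 1) ^ 1) = LinearMap.ker ((T - μ • 1) ^ 2) := by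
    refine le_antisymm (fun w hw => ?_) fun w hw => ?_
    · rw [pow_one, LinearMap.mem_ker] at hw
      simp [sq, hw]
    · have hmem : (T - μ • 1) w ∈ T.eigenspace μ := by
        rwa [Module.End.eigenspace_def, LinearMap.mem_ker, ← Module.End.mul_apply, ← sq]
      by_contra hne
      rw [pow_one, LinearMap.mem_ker] at hne
      exact haniso _ ⟨hmem, hne⟩ (apply_sub_smul_eq_zero_of_mem_eigenspace hT hmem w)
  intro w hw
  obtain ⟨m, hm⟩ := (T.mem_maxGenEigenspace μ w).1 hw
  rw [Module.End.eigenspace_def, ← pow_one (T - μ • 1), Module.End.ker_pow_constant hker m,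
    add_comm, pow_succ', LinearMap.mem_ker, Module.End.mul_apply, hm, map_zero]

variable [IsAlgClosed k]

theorem exists_apply_add_smul_self_eq_zero (B : LinearMap.BilinForm k V) (v : V) {w : V}
    (hw : B w w ≠ 0) : ∃ t : k, B (v + t • w) (v + t • w) = 0 := by
  let p : Polynomial k := .C (B w w) * .X ^ 2 + .C (B v w + B w v) * .X + .C (B v v)
  have hdeg : p.degree ≠ 0 := by
    rw [Polynomial.degree_quadratic hw]
    decide
  obtain ⟨t, ht⟩ := IsAlgClosed.exists_root p hdeg
  refine ⟨t, ?_⟩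
  simp only [Polynomial.IsRoot.def, p, Polynomial.eval_add, Polynomial.eval_mul,
    Polynomial.eval_C, Polynomial.eval_pow, Polynomial.eval_X] at ht
  simp only [map_add, map_smul, LinearMap.add_apply, LinearMap.smul_apply, smul_eq_mul]
  linear_combination ht

theorem exists_smul_eq_of_mem_eigenspace_of_anisotropic {μ : k}
    (haniso : ∀ v, T.HasEigenvector μ v → B v v ≠ 0) {v w : V}
    (hw : T.HasEigenvector μ w) (hv : v ∈ T.eigenspace μ) : ∃ c : k, c • w = v := by
  obtain ⟨t, ht⟩ := exists_apply_add_smul_self_eq_zero B v (haniso w hw)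
  have hmem : v + t • w ∈ T.eigenspace μ := add_mem hv (Submodule.smul_mem _ t hw.1)
  have hzero : v + t • w = 0 := by
    by_contra hne
    exact haniso _ ⟨hmem, hne⟩ ht
  exact ⟨-t, by rw [neg_smul, eq_neg_of_add_eq_zero_left hzero]⟩

theorem exists_basis_hasEigenvector_of_anisotropic {ι : Type*} [Finite ι]
    (b₀ : Module.Basis ι k V) (hT : B.IsSelfAdjoint T)
    (haniso : ∀ μ v, T.HasEigenvector μ v → B v v ≠ 0) :
    ∃ (b : Module.Basis ι k V) (μ : ι → k), Function.Injective μ ∧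
      ∀ i, T.HasEigenvector (μ i) (b i) := by
  have : FiniteDimensional k V := b₀.finiteDimensional_of_finite
  choose v hv using fun μ : T.Eigenvalues => Module.End.HasEigenvalue.exists_hasEigenvector μ.2
  have hli : LinearIndependent k v :=
    T.eigenvectors_linearIndependent' (fun μ : T.Eigenvalues => (μ : k)) Subtype.val_injective v hv
  have hspan : ⊤ ≤ Submodule.span k (Set.range v) := by
    rw [← T.iSup_maxGenEigenspace_eq_top, iSup_le_iff]
    intro μ w hw
    have hw := maxGenEigenspace_le_eigenspace_of_anisotropic hT (haniso μ) hw
    obtain rfl | hw0 := eq_or_ne w 0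
    · exact zero_mem _
    let i : T.Eigenvalues := ⟨μ, Module.End.hasEigenvalue_of_hasEigenvector ⟨hw, hw0⟩⟩
    obtain ⟨c, hc⟩ := exists_smul_eq_of_mem_eigenspace_of_anisotropic (haniso μ) (hv i) hw
    rw [← hc]
    exact Submodule.smul_mem _ _ (Submodule.subset_span ⟨i, rfl⟩)
  let b := Module.Basis.mk hli hspan
  let e := b.indexEquiv b₀
  refine ⟨b.reindex e, fun i => (e.symm i : k), Subtype.val_injective.comp e.symm.injective,
    fun i => ?_⟩
  rw [Module.Basis.reindex_apply, Module.Basis.mk_apply]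
  exact hv (e.symm i)

end SelfAdjoint

section PolynomialKernel

theorem dotProduct_mulVec_comm_of_isSymm {R ι : Type*} [CommRing R] [Fintype ι]
    {A : Matrix ι ι R} (hA : A.IsSymm) (x y : ι → R) : x ⬝ᵥ A *ᵥ y = y ⬝ᵥ A *ᵥ x := by
  rw [← dotProduct_transpose_mulVec, hA.eq]

variable {k ι : Type*} [Field k] {M1 M2 : Matrix ι ι k}

/-- The member `M₁ + X M₂` of the affine pencil through `M₁` and `M₂` at the generic parameter `X`,
used to produce kernel vectors depending polynomially on the parameter. -/
noncomputable def polynomialPencil (M1 M2 : Matrix ι ι k) : Matrix ι ι (Polynomial k) :=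
  M1.map Polynomial.C + (Polynomial.X : Polynomial k) • M2.map Polynomial.C

theorem polynomialPencil_map_eval (M1 M2 : Matrix ι ι k) (t : k) :
    (polynomialPencil M1 M2).map (Polynomial.evalRingHom t) = M1 + t • M2 := by
  ext1 i j
  simp [polynomialPencil, mul_comm t]

variable [Fintype ι]

theorem exists_polynomialPencil_mulVec_eq_zero [DecidableEq ι] [Infinite k]
    (h : ∀ t : k, (M1 + t • M2).det = 0) : ∃ v ≠ 0, polynomialPencil M1 M2 *ᵥ v = 0 := by
  refine exists_mulVec_eq_zero_iff.2 (Polynomial.funext fun t => ?_)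
  rw [Polynomial.eval_zero, ← h t, ← polynomialPencil_map_eval, ← RingHom.mapMatrix_apply,
    ← RingHom.map_det, Polynomial.coe_evalRingHom]

theorem add_smul_mulVec_eval_eq_zero {v : ι → Polynomial k}
    (hv : polynomialPencil M1 M2 *ᵥ v = 0) (t : k) :
    (M1 + t • M2) *ᵥ (Polynomial.eval t ∘ v) = 0 := by
  ext i
  have h := (Polynomial.evalRingHom t).map_mulVec (polynomialPencil M1 M2) v i
  rw [hv, polynomialPencil_map_eval] at h
  simpa using h.symm

/-- The polynomial `v(t)ᵀ M₂ v(X)` is annihilated by `X - t`. -/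
theorem eval_dotProduct_mulVec_eval_eq_zero (hs1 : M1.IsSymm) (hs2 : M2.IsSymm)
    {v : ι → Polynomial k} (hv : polynomialPencil M1 M2 *ᵥ v = 0) (t : k) :
    (Polynomial.eval t ∘ v) ⬝ᵥ M2 *ᵥ (Polynomial.eval t ∘ v) = 0 := by
  set x := Polynomial.eval t ∘ v with hx
  let p (A : Matrix ι ι k) : Polynomial k := v ⬝ᵥ Polynomial.C ∘ (A *ᵥ x)
  have hp {A : Matrix ι ι k} (hA : A.IsSymm) :
      p A = (Polynomial.C ∘ x) ⬝ᵥ A.map Polynomial.C *ᵥ v := by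
    rw [← dotProduct_mulVec_comm_of_isSymm (hA.map _)]
    exact congrArg (v ⬝ᵥ ·) (funext (Polynomial.C.map_mulVec A x))
  have hleft : p M1 + Polynomial.X * p M2 = 0 := by
    rw [hp hs1, hp hs2, ← smul_eq_mul, ← dotProduct_smul, ← smul_mulVec, ← dotProduct_add,
      ← add_mulVec]
    exact (congrArg (_ ⬝ᵥ ·) hv).trans (dotProduct_zero _)
  have hright : p M1 + Polynomial.C t * p M2 = 0 := by
    rw [← smul_eq_mul, ← dotProduct_smul, ← dotProduct_add]
    convert dotProduct_zero v
    ext1 i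
    have hker := congrArg Polynomial.C (congrFun (add_smul_mulVec_eval_eq_zero hv t) i)
    simpa [add_mulVec, smul_mulVec, ← hx] using hker
  have hp2 : p M2 = 0 := by
    have hmul : (Polynomial.X - Polynomial.C t) * p M2 = 0 := by
      linear_combination hleft - hright
    exact (mul_eq_zero.1 hmul).resolve_left (Polynomial.X_sub_C_ne_zero t)
  have heval := congrArg (Polynomial.evalRingHom t) hp2
  rw [RingHom.map_dotProduct] at heval
  simpa [Function.comp_def, hx] using heval

end PolynomialKernel

section Diagonalization

variable {k ι : Type*} [Field k] [Fintype ι] {M1 M2 : Matrix ι ι k}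

/-- The intersection of the quadrics with Gram matrices `M₁` and `M₂` is smooth of codimension two:
by the Jacobian criterion (up to the factor `2`), the gradients `M₁ x` and `M₂ x` are independent
at each of its points. -/
def IsTransverse (M1 M2 : Matrix ι ι k) : Prop :=
  ∀ x : ι → k, x ≠ 0 → x ⬝ᵥ M1 *ᵥ x = 0 → x ⬝ᵥ M2 *ᵥ x = 0 →
    LinearIndependent k ![M1 *ᵥ x, M2 *ᵥ x]

theorem IsTransverse.add_smul (h : IsTransverse M1 M2) (t : k) :
    IsTransverse (M1 + t • M2) M2 := by
  intro x hx h1 h2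
  rw [add_mulVec, smul_mulVec] at h1 ⊢
  rw [LinearIndependent.pair_add_smul_left_iff]
  exact h x hx (by simpa [dotProduct_add, dotProduct_smul, h2] using h1) h2

theorem IsTransverse.dotProduct_mulVec_ne_zero (h : IsTransverse M1 M2) {μ : k} {x : ι → k}
    (hx : x ≠ 0) (hμ : M2 *ᵥ x = μ • M1 *ᵥ x) : x ⬝ᵥ M1 *ᵥ x ≠ 0 := by
  intro h1
  have h2 : x ⬝ᵥ M2 *ᵥ x = 0 := by rw [hμ, dotProduct_smul, h1, smul_zero]
  have hind := LinearIndependent.pair_iff.1 (h x hx h1 h2) μ (-1) (by rw [hμ]; simp)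
  exact neg_ne_zero.2 one_ne_zero hind.2

theorem dotProduct_mulVec_eq_zero_of_mulVec_eq_smul (hs1 : M1.IsSymm) (hs2 : M2.IsSymm)
    {μ ν : k} (hμν : μ ≠ ν) {x y : ι → k} (hx : M2 *ᵥ x = μ • M1 *ᵥ x)
    (hy : M2 *ᵥ y = ν • M1 *ᵥ y) : x ⬝ᵥ M1 *ᵥ y = 0 := by
  have h := dotProduct_mulVec_comm_of_isSymm hs2 x y
  rw [hx, hy, dotProduct_smul, dotProduct_smul, dotProduct_mulVec_comm_of_isSymm hs1 y x] at h
  by_contra h0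
  exact hμν (mul_right_cancel₀ h0 h).symm

variable [DecidableEq ι]

theorem IsTransverse.exists_det_add_smul_ne_zero [Infinite k] (h : IsTransverse M1 M2)
    (hs1 : M1.IsSymm) (hs2 : M2.IsSymm) : ∃ t : k, (M1 + t • M2).det ≠ 0 := by
  by_contra! hdet
  obtain ⟨v, hv0, hv⟩ := exists_polynomialPencil_mulVec_eq_zero hdet
  obtain ⟨i, hi⟩ := Function.ne_iff.1 hv0
  obtain ⟨t, ht⟩ : ∃ t, (v i).eval t ≠ 0 := by
    by_contra! h0
    exact hi (Polynomial.funext fun t => by simpa using h0 t)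
  have hx0 : Polynomial.eval t ∘ v ≠ 0 := fun h0 => ht (congrFun h0 i)
  have hker := add_smul_mulVec_eval_eq_zero hv t
  have hx2 := eval_dotProduct_mulVec_eval_eq_zero hs1 hs2 hv t
  have hind := h.add_smul t _ hx0 (by rw [hker, dotProduct_zero]) hx2
  rw [hker] at hind
  exact hind.ne_zero 0 rfl

theorem IsTransverse.exists_basis_mulVec_eq_smul [IsAlgClosed k] (h : IsTransverse M1 M2)
    (hs1 : M1.IsSymm) (hs2 : M2.IsSymm) (hdet : M1.det ≠ 0) :
    ∃ (b : Module.Basis ι k (ι → k)) (μ : ι → k), Function.Injective μ ∧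
      ∀ i, M2 *ᵥ b i = μ i • M1 *ᵥ b i := by
  let T : Module.End k (ι → k) := (M1⁻¹ * M2).mulVecLin
  have hM1T (x : ι → k) : M1 *ᵥ T x = M2 *ᵥ x := by
    simp [T, mul_nonsing_inv_cancel_left _ _ (isUnit_iff_ne_zero.2 hdet)]
  have heigen {ν : k} {x : ι → k} (hx : T.HasEigenvector ν x) : M2 *ᵥ x = ν • M1 *ᵥ x := by
    rw [← hM1T, hx.apply_eq_smul, mulVec_smul]
  have hT : (toBilin' M1).IsSelfAdjoint T := fun x y => by
    rw [toBilin'_apply', toBilin'_apply', hM1T, dotProduct_mulVec_comm_of_isSymm hs1, hM1T,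
      dotProduct_mulVec_comm_of_isSymm hs2]
  have haniso (ν : k) (x : ι → k) (hx : T.HasEigenvector ν x) : toBilin' M1 x x ≠ 0 := by
    rw [toBilin'_apply']
    exact h.dotProduct_mulVec_ne_zero hx.2 (heigen hx)
  obtain ⟨b, μ, hμ, hb⟩ := exists_basis_hasEigenvector_of_anisotropic (Pi.basisFun k ι) hT haniso
  exact ⟨b, μ, hμ, fun i => heigen (hb i)⟩

theorem IsTransverse.exists_diagonal_of_det_ne_zero [IsAlgClosed k] (h : IsTransverse M1 M2)
    (hs1 : M1.IsSymm) (hs2 : M2.IsSymm) (hdet : M1.det ≠ 0) :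
    ∃ (Q : Matrix ι ι k) (a μ : ι → k), IsUnit Q.det ∧ (∀ i, a i ≠ 0) ∧ Function.Injective μ ∧
      Qᵀ * M1 * Q = diagonal a ∧ Qᵀ * M2 * Q = diagonal (μ * a) := by
  obtain ⟨b, μ, hμ, hb⟩ := h.exists_basis_mulVec_eq_smul hs1 hs2 hdet
  let Q : Matrix ι ι k := (of b)ᵀ
  let a (i : ι) : k := b i ⬝ᵥ M1 *ᵥ b i
  have hentry (A : Matrix ι ι k) (i j : ι) : (Qᵀ * A * Q) i j = b i ⬝ᵥ A *ᵥ b j := by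
    rw [Matrix.mul_assoc]
    rfl
  have hM1 : Qᵀ * M1 * Q = diagonal a := by
    ext1 i j
    obtain rfl | hij := eq_or_ne i j
    · rw [hentry, diagonal_apply_eq]
    · rw [hentry, diagonal_apply_ne _ hij,
        dotProduct_mulVec_eq_zero_of_mulVec_eq_smul hs1 hs2 (hμ.ne hij) (hb i) (hb j)]
  refine ⟨Q, a, μ, ?_, fun i => h.dotProduct_mulVec_ne_zero (b.ne_zero i) (hb i), hμ, hM1, ?_⟩
  · rw [← isUnit_iff_isUnit_det, ← linearIndependent_cols_iff_isUnit]
    exact b.linearIndependent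
  · ext1 i j
    rw [hentry, hb, dotProduct_smul, ← hentry, hM1]
    obtain rfl | hij := eq_or_ne i j <;> simp [*]

theorem IsTransverse.exists_diagonal [IsAlgClosed k] (h : IsTransverse M1 M2)
    (hs1 : M1.IsSymm) (hs2 : M2.IsSymm) :
    ∃ (Q : Matrix ι ι k) (a b : ι → k), IsUnit Q.det ∧ Qᵀ * M1 * Q = diagonal a ∧
      Qᵀ * M2 * Q = diagonal b ∧ Pairwise fun i j => a i * b j ≠ a j * b i := by
  obtain ⟨t, ht⟩ := h.exists_det_add_smul_ne_zero hs1 hs2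
  obtain ⟨Q, a, μ, hQ, ha, hμ, hM0, hM2⟩ :=
    (h.add_smul t).exists_diagonal_of_det_ne_zero (hs1.add (hs2.smul t)) hs2 ht
  have hM1 : Qᵀ * M1 * Q = diagonal fun i => a i - t * (μ i * a i) := by
    rw [Matrix.mul_add, Matrix.add_mul, Matrix.mul_smul, Matrix.smul_mul, hM2] at hM0
    rw [eq_sub_of_add_eq hM0, ← diagonal_smul, diagonal_sub]
    rfl
  refine ⟨Q, _, _, hQ, hM1, hM2, fun i j hij heq => ?_⟩
  have hzero : a i * a j * (μ j - μ i) = 0 := by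
    simp only [Pi.mul_apply] at heq
    linear_combination heq
  simp [ha, sub_eq_zero, hμ.ne hij.symm] at hzero

end Diagonalization

theorem stmt10_general {k : Type*} [Field k] [IsAlgClosed k] {n : ℕ} (hn : 1 ≤ n)
    (M1 M2 : Matrix (Fin (n + 1)) (Fin (n + 1)) k) (hs1 : M1.IsSymm) (hs2 : M2.IsSymm)
    (hsmooth : IsTransverse M1 M2) :
    pencilDualForm M1 M2 ≠ 0 ∧
    (pencilDualForm M1 M2).IsWeightedHomogeneous (Sum.elim (fun _ => 1) (fun _ => 0)) n ∧
    (∀ h : Fin (n + 1) → k, h ≠ 0 →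
      MvPolynomial.aeval (Sum.elim (X : Fin 2 → MvPolynomial (Fin 2) k) (fun j => C (h j)))
        (pencilDualForm M1 M2) ≠ 0) ∧
    Irreducible (pencilDualForm M1 M2) := by
  have : Nontrivial (Fin (n + 1)) := Fin.nontrivial_iff_two_le.2 (Nat.succ_le_succ hn)
  obtain ⟨Q, a, b, hQ, hM1, hM2, hab⟩ := hsmooth.exists_diagonal hs1 hs2
  have hirr : Irreducible (pencilDualForm M1 M2) :=
    (irreducible_pencilDualForm_iff M1 M2).2 (irreducible_adjugateForm_pencil hQ hM1 hM2 hab)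
  refine ⟨hirr.ne_zero, isWeightedHomogeneous_pencilDualForm M1 M2, fun h hh => ?_, hirr⟩
  rw [aeval_pencilDualForm]
  exact adjugateForm_pencil_ne_zero hQ hM1 hM2 hab hh

/-- Let `X ⊂ Pⁿ` (`n ≥ 4`) be a smooth complete intersection of two quadrics over an
algebraically closed field of characteristic not 2, `D ≅ P¹` the pencil of quadrics
containing `X`, and `Z = {(q,h) ∈ D × (Pⁿ)* : q ∩ h is singular}`.  Then the second
projection `Z → (Pⁿ)*` is a finite flat covering of degree `n`, and `Z` is integral:
the defining equation `G` of `Z` is nonzero, homogeneous of degree `n` in the pencil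
variables `(λ, μ)` (so that every fibre over a hyperplane is a nonzero binary form of
degree `n`, giving `n` points with multiplicity), its restriction to each hyperplane
`h ≠ 0` is nonzero, and `G` is irreducible. -/
theorem stmt10 {k : Type*} [Field k] [IsAlgClosed k] (h2 : (2 : k) ≠ 0)
    {n : ℕ} (hn : 4 ≤ n)
    (M1 M2 : Matrix (Fin (n + 1)) (Fin (n + 1)) k) (hs1 : M1.IsSymm) (hs2 : M2.IsSymm)
    (hsmooth : ∀ x : Fin (n + 1) → k, x ≠ 0 →
      x ⬝ᵥ M1.mulVec x = 0 → x ⬝ᵥ M2.mulVec x = 0 →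
      LinearIndependent k ![M1.mulVec x, M2.mulVec x]) :
    pencilDualForm M1 M2 ≠ 0 ∧
    (pencilDualForm M1 M2).IsWeightedHomogeneous (Sum.elim (fun _ => 1) (fun _ => 0)) n ∧
    (∀ h : Fin (n + 1) → k, h ≠ 0 →
      MvPolynomial.aeval (Sum.elim (X : Fin 2 → MvPolynomial (Fin 2) k) (fun j => C (h j)))
        (pencilDualForm M1 M2) ≠ 0) ∧
    Irreducible (pencilDualForm M1 M2) :=
  stmt10_general ((by decide : 1 ≤ 4).trans hn) M1 M2 hs1 hs2 hsmooth
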